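/- Let G be the parallel composition of r ≥ 2 paths whose lengths have mixed parities (at least one path of odd length and at least one path of even length), let H_1 be the parallel composition of the paths of odd length, and let H_2 be the parallel composition of the paths of even length. Then reg(G) ≤ reg(H_1) + reg(H_2) + (q−2). -/

import Mathlib

open MvPolynomial

/-- A finite multigraph without loops: each edge `e` has two distinct endpoints
`fst e` and `snd e`.  Multiple edges with the same endpoints are allowed. -/
structure Multigraph (V E : Type) : Type where
  fst : E → V
  snd : E → V
  ne : ∀ e, fst e ≠ snd e

namespace Multigraph

variable {V E : Type}

/-- Vertex `v` is an endpoint of the edge `e`. -/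
def Incident (G : Multigraph V E) (v : V) (e : E) : Prop :=
  G.fst e = v ∨ G.snd e = v

instance (G : Multigraph V E) [DecidableEq V] (v : V) : DecidablePred (G.Incident v) :=
  fun e => inferInstanceAs (Decidable (G.fst e = v ∨ G.snd e = v))

/-- The degree of a vertex: the number of edges incident to it. -/
noncomputable def degree (G : Multigraph V E) (v : V) : ℕ :=
  Nat.card {e : E // G.Incident v e}

/-- The graph has no isolated vertices. -/
def NoIsolated (G : Multigraph V E) : Prop :=
  ∀ v : V, ∃ e : E, G.Incident v e

variable (K : Type) [Field K] [Fintype K]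

/-- The point of the affine torus associated with an assignment `x` of nonzero
scalars to the vertices: its coordinate at an edge `e = {v,w}` is `x v * x w`. -/
def point (G : Multigraph V E) (x : V → Kˣ) : E → K :=
  fun e => (x (G.fst e) : K) * (x (G.snd e) : K)

/-- The projective toric subset `X` parameterized by `G`, realized as the set of
`Kˣ`-orbits (i.e. projective points) of the points `G.point K x`, `x : V → Kˣ`. -/
def toricSet (G : Multigraph V E) : Set (Set (E → K)) :=
  Set.range fun x : V → Kˣ => MulAction.orbit Kˣ (G.point K x)

/-- The vanishing ideal `I(X)` of the projective toric subset parameterized by `G`: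
the ideal of all polynomials each of whose homogeneous components vanishes at the
point `G.point K x` for every `x : V → Kˣ`. -/
def vanishingIdeal (G : Multigraph V E) : Ideal (MvPolynomial E K) where
  carrier := {f | ∀ (x : V → Kˣ) (d : ℕ), eval (G.point K x) (homogeneousComponent d f) = 0}
  zero_mem' := by intro x d; simp
  add_mem' := by
    intro a b ha hb x d
    rw [map_add, map_add, ha x d, hb x d, add_zero]
  smul_mem' := by
    intro c f hf x n
    rw [smul_eq_mul, ← sum_homogeneousComponent f, Finset.mul_sum, map_sum, map_sum]
    refine Finset.sum_eq_zero fun d _ => ?_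
    nth_rewrite 1 [← sum_homogeneousComponent c]
    rw [Finset.sum_mul, map_sum, map_sum]
    refine Finset.sum_eq_zero fun e _ => ?_
    have h1 : (homogeneousComponent e c * homogeneousComponent d f).IsHomogeneous (e + d) :=
      (homogeneousComponent_isHomogeneous e c).mul (homogeneousComponent_isHomogeneous d f)
    rw [homogeneousComponent_of_mem ((mem_homogeneousSubmodule _ _).mpr h1)]
    split_ifs
    · rw [map_mul, hf x d, mul_zero]
    · simp

/-- The Hilbert function of `S/I(X)`: the dimension over `K` of the degree-`d`
homogeneous component of the quotient, realized as the image of the space of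
degree-`d` homogeneous polynomials in the quotient. -/
noncomputable def hilbert (G : Multigraph V E) (d : ℕ) : ℕ :=
  Module.finrank K
    ((homogeneousSubmodule E K d).map (Ideal.Quotient.mkₐ K (G.vanishingIdeal K)).toLinearMap)

/-- The regularity `reg G`: the least `d` such that the Hilbert function of `S/I(X)`
at `d` equals the number of points of `X`. -/
noncomputable def reg (G : Multigraph V E) : ℕ :=
  sInf {d : ℕ | G.hilbert K d = (G.toricSet K).ncard}

/-- The graph obtained from `G` by deleting a vertex `v` and all edges incident
to it. -/
def deleteVert (G : Multigraph V E) (v : V) :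
    Multigraph {w : V // w ≠ v} {e : E // ¬ G.Incident v e} where
  fst e := ⟨G.fst e.1, fun h => e.2 (Or.inl h)⟩
  snd e := ⟨G.snd e.1, fun h => e.2 (Or.inr h)⟩
  ne e h := G.ne e.1 (congrArg Subtype.val h)

/-- The graph obtained from `G` by identifying the vertex `v₂` with the vertex `v₁`:
the edges are the same, and every endpoint equal to `v₂` is replaced by `v₁`.
This requires that `{v₁, v₂}` is a non-edge of `G`, so that no loops are created. -/
def identifyVert [DecidableEq V] (G : Multigraph V E) (v₁ v₂ : V) (h12 : v₁ ≠ v₂)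
    (h : ∀ e, ¬ (G.Incident v₁ e ∧ G.Incident v₂ e)) :
    Multigraph {w : V // w ≠ v₂} E where
  fst e := ⟨if G.fst e = v₂ then v₁ else G.fst e, by split_ifs with hh; exacts [h12, hh]⟩
  snd e := ⟨if G.snd e = v₂ then v₁ else G.snd e, by split_ifs with hh; exacts [h12, hh]⟩
  ne := by
    intro e heq
    rw [Subtype.ext_iff] at heq
    simp only at heq
    split_ifs at heq with h1 h2 h2
    · exact G.ne e (h1.trans h2.symm)
    · exact h e ⟨Or.inr heq.symm, Or.inl h1⟩
    · exact h e ⟨Or.inl heq, Or.inr h2⟩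
    · exact G.ne e heq

/-- The subgraph of `G` determined by a set `A` of edges of `G`, together with all
endpoints of those edges (so it has no isolated vertices). -/
def subgraph [DecidableEq V] (G : Multigraph V E) (A : Finset E) :
    Multigraph {v : V // ∃ e ∈ A, G.Incident v e} {e : E // e ∈ A} where
  fst e := ⟨G.fst e.1, e.1, e.2, Or.inl rfl⟩
  snd e := ⟨G.snd e.1, e.1, e.2, Or.inr rfl⟩
  ne e h := G.ne e.1 (congrArg Subtype.val h)

end Multigraph

/-- The vertex of the parallel composition of paths of lengths `k i` lying on the
`i`-th path at distance `j` from the common initial vertex:  `j = 0` gives the common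
initial vertex, `j = k i` the common terminal vertex, and `0 < j < k i` gives the
`j`-th interior vertex of the `i`-th path. -/
def pcVert {ι : Type} (k : ι → ℕ) (i : ι) (j : ℕ) :
    Bool ⊕ ((i : ι) × Fin (k i - 1)) :=
  if h0 : j = 0 then Sum.inl false
  else if h : j < k i then Sum.inr ⟨i, ⟨j - 1, by omega⟩⟩
  else Sum.inl true

/-- The parallel composition of the family of paths `P i` of lengths `k i` (`i : ι`):
the `i`-th path has `k i` edges indexed by `Fin (k i)`, its `j`-th edge joining the
vertices of the `i`-th path at distances `j` and `j + 1` from the common initial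
vertex.  All the initial vertices of the paths are identified to a single vertex and
all the terminal vertices are identified to a single vertex. -/
def parallelComp {ι : Type} (k : ι → ℕ) :
    Multigraph (Bool ⊕ ((i : ι) × Fin (k i - 1))) ((i : ι) × Fin (k i)) where
  fst e := pcVert k e.1 e.2.1
  snd e := pcVert k e.1 (e.2.1 + 1)
  ne := by
    rintro ⟨i, j⟩ h
    have hj := j.2
    simp only [pcVert] at h
    split_ifs at h <;> simp_all <;> omega

/-- The monomial `f i`: the product of the edges of the `i`-th path of the parallel
composition in odd positions (positions `1, 3, 5, ...`, i.e. indices `0, 2, 4, ...`). -/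
noncomputable def oddProd {ι : Type} (K : Type) [Field K] (k : ι → ℕ) (i : ι) :
    MvPolynomial ((i : ι) × Fin (k i)) K :=
  ∏ m : Fin ((k i + 1) / 2), X ⟨i, ⟨2 * m.1, by have := m.2; omega⟩⟩

/-- The monomial `g i`: the product of the edges of the `i`-th path of the parallel
composition in even positions (positions `2, 4, 6, ...`, i.e. indices `1, 3, 5, ...`). -/
noncomputable def evenProd {ι : Type} (K : Type) [Field K] (k : ι → ℕ) (i : ι) :
    MvPolynomial ((i : ι) × Fin (k i)) K :=
  ∏ m : Fin (k i / 2), X ⟨i, ⟨2 * m.1 + 1, by have := m.2; omega⟩⟩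

/-!
The Hilbert function of `S/I(X)` reaches `|X|` in degree `d` exactly when forms of degree `d`
separate the points of `X`. Since `X` is a group under coordinatewise multiplication, it suffices
to separate the identity `[1 : ⋯ : 1]` from the other points, so `reg G` is the least degree of a
form that vanishes at every point of `X` except the identity.

If two graphs map to `G` and their images together contain all edges of `G`, multiply two such
forms `f₁` and `f₂` of minimal degree. At a point of `X` where the product does not vanish, the
coordinates are constant on each of the two images. The form `(t_a^(q-1) - t_b^(q-1)) / (t_a - t_b)`
of degree `q - 2`, with `t_a` in the first image and `t_b` in the second, forces the two constants
to agree.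
-/

section Forms

variable {σ R K : Type*} [CommSemiring R] [Field K]

lemma eval_smul_of_isHomogeneous {d : ℕ} {f : MvPolynomial σ R} (hf : f.IsHomogeneous d) (c : R)
    (p : σ → R) : eval (c • p) f = c ^ d * eval p f := by
  rw [eval_eq, eval_eq, Finset.mul_sum]
  refine Finset.sum_congr rfl fun m hm => ?_
  have hdeg : ∑ i ∈ m.support, m i = d := (hf.degree_eq_sum_deg_support hm).symm
  simp only [Pi.smul_apply, smul_eq_mul, mul_pow, Finset.prod_mul_distrib,
    Finset.prod_pow_eq_pow_sum, hdeg]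
  ring

lemma eval_eq_zero_iff_of_orbit_eq {d : ℕ} {f : MvPolynomial σ R} (hf : f.IsHomogeneous d)
    {p p' : σ → R} (h : MulAction.orbit Rˣ p = MulAction.orbit Rˣ p') :
    eval p f = 0 ↔ eval p' f = 0 := by
  obtain ⟨c, rfl⟩ := MulAction.orbit_eq_iff.mp h
  have hsmul : eval (c • p') f = (c : R) ^ d * eval p' f :=
    eval_smul_of_isHomogeneous hf (c : R) p'
  rw [hsmul, (c.isUnit.pow d).mul_right_eq_zero]

lemma exists_isHomogeneous_eval_eq_eval_mul {d : ℕ} {f : MvPolynomial σ R}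
    (hf : f.IsHomogeneous d) (c : σ → R) :
    ∃ g : MvPolynomial σ R, g.IsHomogeneous d ∧ ∀ p, eval p g = eval (c * p) f := by
  refine ⟨bind₁ (fun i => C (c i) * X i) f, ?_, fun p => ?_⟩
  · simpa only [one_mul, aeval_eq_bind₁] using hf.aeval _ fun i => isHomogeneous_C_mul_X (c i) i
  · simp only [← coe_aeval_eq_eval, RingHom.coe_coe, aeval_bind₁, map_mul, aeval_C, aeval_X]
    rfl

lemma orbit_mul_right_eq {p p' : σ → R} (h : MulAction.orbit Rˣ p = MulAction.orbit Rˣ p')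
    (r : σ → R) : MulAction.orbit Rˣ (p * r) = MulAction.orbit Rˣ (p' * r) := by
  obtain ⟨c, rfl⟩ := MulAction.orbit_eq_iff.mp h
  exact MulAction.orbit_eq_iff.mpr ⟨c, (smul_mul_assoc c p' r).symm⟩

lemma orbit_eq_orbit_one_iff {p : σ → K} (hp : ∀ i, p i ≠ 0) :
    MulAction.orbit Kˣ p = MulAction.orbit Kˣ 1 ↔ ∀ i j, p i = p j := by
  rw [MulAction.orbit_eq_iff]
  constructor
  · rintro ⟨c, rfl⟩ _ _
    rfl
  · intro hconst
    rcases isEmpty_or_nonempty σ with _ | ⟨⟨i₀⟩⟩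
    · exact ⟨1, Subsingleton.elim _ _⟩
    · refine ⟨Units.mk0 (p i₀) (hp i₀), funext fun i => ?_⟩
      simp [Units.smul_def, hconst i i₀]

variable [Fintype K]

variable (K) in
/-- The form `(t_a^(q-1) - t_b^(q-1)) / (t_a - t_b)` of degree `q - 2`, where `q = |K|`. It detects
whether two nonzero coordinates agree. -/
noncomputable def linkForm (a b : σ) : MvPolynomial σ K :=
  ∑ i ∈ Finset.range (Fintype.card K - 1), X a ^ i * X b ^ (Fintype.card K - 1 - 1 - i)

lemma linkForm_isHomogeneous (a b : σ) : (linkForm K a b).IsHomogeneous (Fintype.card K - 2) := by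
  refine IsHomogeneous.sum _ _ _ fun i hi => ?_
  have hdeg : i + (Fintype.card K - 1 - 1 - i) = Fintype.card K - 2 := by
    have := Finset.mem_range.mp hi
    omega
  simpa only [hdeg] using (isHomogeneous_X_pow (R := K) a i).mul
    (isHomogeneous_X_pow b (Fintype.card K - 1 - 1 - i))

lemma eval_linkForm_ne_zero_iff {a b : σ} {p : σ → K} (ha : p a ≠ 0) (hb : p b ≠ 0) :
    eval p (linkForm K a b) ≠ 0 ↔ p a = p b := by
  have heval : eval p (linkForm K a b) = ∑ i ∈ Finset.range (Fintype.card K - 1),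
      p a ^ i * p b ^ (Fintype.card K - 1 - 1 - i) := by
    simp [linkForm]
  rw [heval]
  constructor
  · have hmul := (Commute.all (p a) (p b)).geom_sum₂_mul (Fintype.card K - 1)
    rw [FiniteField.pow_card_sub_one_eq_one _ ha, FiniteField.pow_card_sub_one_eq_one _ hb,
      sub_self] at hmul
    exact fun hne => sub_eq_zero.mp ((mul_eq_zero.mp hmul).resolve_left hne)
  · intro hab
    have hcard : ((Fintype.card K - 1 : ℕ) : K) = -1 := by
      simp [Nat.cast_sub Fintype.card_pos]
    rw [hab, geom_sum₂_self, hcard]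
    exact mul_ne_zero (neg_ne_zero.mpr one_ne_zero) (pow_ne_zero _ hb)

lemma eval_one_linkForm_ne_zero (a b : σ) : eval 1 (linkForm K a b) ≠ 0 :=
  (eval_linkForm_ne_zero_iff (by simp) (by simp)).mpr rfl

end Forms

namespace Multigraph

variable {V E V₁ E₁ V₂ E₂ : Type} (K : Type) [Field K]

section Points

variable (G : Multigraph V E)

lemma point_ne_zero (x : V → Kˣ) (e : E) : G.point K x e ≠ 0 :=
  mul_ne_zero (Units.ne_zero _) (Units.ne_zero _)

lemma point_one : G.point K 1 = 1 := by
  ext e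
  simp [point]

lemma point_mul (x y : V → Kˣ) : G.point K (x * y) = G.point K x * G.point K y := by
  ext e
  simp [point, mul_mul_mul_comm]

/-- The projective point of `X` with torus parameters `x`. -/
def toricPoint (x : V → Kˣ) : G.toricSet K :=
  ⟨MulAction.orbit Kˣ (G.point K x), x, rfl⟩

/-- A choice of torus parameters for each projective point of `X`. -/
noncomputable def params (P : G.toricSet K) : V → Kˣ :=
  P.2.choose

lemma orbit_point_params (P : G.toricSet K) :
    MulAction.orbit Kˣ (G.point K (G.params K P)) = P :=
  P.2.choose_spec

/-- Evaluation of polynomials at the chosen affine representatives of the points of `X`. -/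
noncomputable def evalMap : MvPolynomial E K →ₗ[K] (G.toricSet K → K) :=
  LinearMap.pi fun P => (aeval (G.point K (G.params K P))).toLinearMap

lemma evalMap_apply (f : MvPolynomial E K) (P : G.toricSet K) :
    G.evalMap K f P = eval (G.point K (G.params K P)) f := by
  simp [evalMap, aeval_eq_eval]

variable {K} {d : ℕ} {f : MvPolynomial E K}

lemma evalMap_toricPoint_eq_zero_iff (hf : f.IsHomogeneous d) (x : V → Kˣ) :
    G.evalMap K f (G.toricPoint K x) = 0 ↔ eval (G.point K x) f = 0 := by
  rw [evalMap_apply]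
  exact eval_eq_zero_iff_of_orbit_eq hf (G.orbit_point_params K (G.toricPoint K x))

lemma mem_vanishingIdeal_iff (hf : f.IsHomogeneous d) :
    f ∈ G.vanishingIdeal K ↔ ∀ x, eval (G.point K x) f = 0 := by
  change (∀ (x : V → Kˣ) (n : ℕ), eval (G.point K x) (homogeneousComponent n f) = 0) ↔ _
  refine forall_congr' fun x => ⟨fun h => ?_, fun h n => ?_⟩
  · simpa only [homogeneousComponent_eq_self hf] using h d
  · rw [homogeneousComponent_of_mem ((mem_homogeneousSubmodule _ _).mpr hf)]
    split_ifs
    · exact h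
    · exact map_zero _

lemma mem_vanishingIdeal_iff_evalMap_eq_zero (hf : f.IsHomogeneous d) :
    f ∈ G.vanishingIdeal K ↔ G.evalMap K f = 0 := by
  rw [G.mem_vanishingIdeal_iff hf]
  constructor
  · intro h
    ext P
    rw [evalMap_apply]
    exact h _
  · intro h x
    rw [← G.evalMap_toricPoint_eq_zero_iff hf, h, Pi.zero_apply]

end Points

section Hilbert

variable (G : Multigraph V E)

lemma hilbert_eq_finrank_map_evalMap (d : ℕ) :
    G.hilbert K d = Module.finrank K ((homogeneousSubmodule E K d).map (G.evalMap K)) := by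
  have hker : LinearMap.ker ((Ideal.Quotient.mkₐ K (G.vanishingIdeal K)).toLinearMap.domRestrict
      (homogeneousSubmodule E K d)) =
      LinearMap.ker ((G.evalMap K).domRestrict (homogeneousSubmodule E K d)) := by
    ext ⟨f, hf⟩
    simp only [LinearMap.mem_ker, LinearMap.domRestrict_apply, AlgHom.toLinearMap_apply,
      Ideal.Quotient.mkₐ_eq_mk, Ideal.Quotient.eq_zero_iff_mem]
    exact G.mem_vanishingIdeal_iff_evalMap_eq_zero hf
  rw [hilbert, ← LinearMap.range_domRestrict, ← LinearMap.range_domRestrict]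
  exact ((LinearMap.quotKerEquivRange _).symm ≪≫ₗ Submodule.quotEquivOfEq _ _ hker ≪≫ₗ
    LinearMap.quotKerEquivRange _).finrank_eq

lemma hilbert_eq_ncard_iff_map_evalMap_eq_top [Finite K] [Finite V] (d : ℕ) :
    G.hilbert K d = (G.toricSet K).ncard ↔
      (homogeneousSubmodule E K d).map (G.evalMap K) = ⊤ := by
  have : Finite (G.toricSet K) := Set.finite_range _
  have := Fintype.ofFinite (G.toricSet K)
  have hcard : (G.toricSet K).ncard = Module.finrank K (G.toricSet K → K) := by
    rw [Module.finrank_fintype_fun_eq_card, ← Nat.card_eq_fintype_card, Nat.card_coe_set_eq]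
  rw [hilbert_eq_finrank_map_evalMap, hcard]
  exact ⟨Submodule.eq_top_of_finrank_eq, fun h => by rw [h, finrank_top]⟩

end Hilbert

section Indicator

/-- `f` is a form of degree `d` that vanishes at every point of the toric set of `G` except at the
one with torus parameters `y`. -/
structure IsIndicator (G : Multigraph V E) (y : V → Kˣ) (d : ℕ) (f : MvPolynomial E K) :
    Prop where
  isHomogeneous : f.IsHomogeneous d
  eval_ne_zero : eval (G.point K y) f ≠ 0
  orbit_eq : ∀ x, eval (G.point K x) f ≠ 0 →
    MulAction.orbit Kˣ (G.point K x) = MulAction.orbit Kˣ (G.point K y)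

variable {K} {G : Multigraph V E} {d : ℕ}

lemma isIndicator_one_iff {f : MvPolynomial E K} :
    G.IsIndicator K 1 d f ↔ f.IsHomogeneous d ∧ eval 1 f ≠ 0 ∧
      ∀ x, eval (G.point K x) f ≠ 0 → ∀ e e', G.point K x e = G.point K x e' := by
  simp only [← orbit_eq_orbit_one_iff (G.point_ne_zero K _)]
  rw [← G.point_one K]
  exact ⟨fun h => ⟨h.1, h.2, h.3⟩, fun h => ⟨h.1, h.2.1, h.2.2⟩⟩

lemma IsIndicator.exists_mul {f : MvPolynomial E K} {y : V → Kˣ} (hf : G.IsIndicator K y d f)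
    (z : V → Kˣ) : ∃ g, G.IsIndicator K (y * z) d g := by
  obtain ⟨g, hg, hgeval⟩ := exists_isHomogeneous_eval_eq_eval_mul hf.isHomogeneous (G.point K z⁻¹)
  simp only [mul_comm (G.point K z⁻¹)] at hgeval
  refine ⟨g, hg, ?_, fun x hx => ?_⟩
  · rw [hgeval, ← point_mul, mul_inv_cancel_right]
    exact hf.eval_ne_zero
  · rw [hgeval, ← point_mul] at hx
    have horbit := orbit_mul_right_eq (hf.orbit_eq _ hx) (G.point K z)
    rwa [← point_mul, ← point_mul, inv_mul_cancel_right] at horbit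

lemma IsIndicator.evalMap_eq_smul_single [DecidableEq (G.toricSet K)] {f : MvPolynomial E K}
    {P : G.toricSet K} (hf : G.IsIndicator K (G.params K P) d f) :
    G.evalMap K f = G.evalMap K f P • Pi.single P 1 := by
  ext Q
  rcases eq_or_ne Q P with rfl | hQP
  · simp
  · have hzero : G.evalMap K f Q = 0 := by
      by_contra hne
      rw [evalMap_apply] at hne
      have horbit := hf.orbit_eq _ hne
      rw [orbit_point_params, orbit_point_params] at horbit
      exact hQP (Subtype.ext horbit)
    simp [hzero, hQP]

lemma isIndicator_of_evalMap_eq_single [DecidableEq (G.toricSet K)] {f : MvPolynomial E K}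
    (hf : f.IsHomogeneous d) {y : V → Kˣ}
    (hsingle : G.evalMap K f = Pi.single (G.toricPoint K y) 1) : G.IsIndicator K y d f := by
  refine ⟨hf, ?_, fun x hx => ?_⟩
  · rw [ne_eq, ← G.evalMap_toricPoint_eq_zero_iff hf, hsingle, Pi.single_eq_same]
    exact one_ne_zero
  · rw [ne_eq, ← G.evalMap_toricPoint_eq_zero_iff hf, hsingle] at hx
    by_contra hne
    exact hx (Pi.single_eq_of_ne (fun h => hne (congrArg Subtype.val h)) 1)

lemma map_evalMap_eq_top_iff_exists_isIndicator [Finite K] [Finite V] :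
    (homogeneousSubmodule E K d).map (G.evalMap K) = ⊤ ↔ ∃ f, G.IsIndicator K 1 d f := by
  classical
  have : Finite (G.toricSet K) := Set.finite_range _
  have := Fintype.ofFinite (G.toricSet K)
  constructor
  · intro htop
    obtain ⟨f, hf, hsingle⟩ :=
      htop.ge (Submodule.mem_top (x := Pi.single (G.toricPoint K 1) (1 : K)))
    exact ⟨f, isIndicator_of_evalMap_eq_single hf hsingle⟩
  · rintro ⟨f, hf⟩
    refine eq_top_iff.mpr fun v _ => ?_
    rw [pi_eq_sum_univ' v]
    refine Submodule.sum_mem _ fun P _ => Submodule.smul_mem _ _ ?_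
    obtain ⟨g, hg⟩ := hf.exists_mul (G.params K P)
    rw [one_mul] at hg
    have hne : G.evalMap K g P ≠ 0 := by
      rw [evalMap_apply]
      exact hg.eval_ne_zero
    have hmem := Submodule.mem_map_of_mem (f := G.evalMap K)
      ((mem_homogeneousSubmodule d g).mpr hg.isHomogeneous)
    rw [hg.evalMap_eq_smul_single] at hmem
    exact (Submodule.smul_mem_iff _ hne).mp hmem

variable (K G) in
lemma exists_isIndicator_one [Finite K] [Finite E] : ∃ d f, G.IsIndicator K 1 d f := by
  have := Fintype.ofFinite K
  have := Fintype.ofFinite E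
  refine ⟨∑ _ : E × E, (Fintype.card K - 2), ∏ p : E × E, linkForm K p.1 p.2,
    isIndicator_one_iff.mpr ⟨IsHomogeneous.prod _ _ _ fun p _ => linkForm_isHomogeneous p.1 p.2,
      ?_, fun x hx e e' => ?_⟩⟩
  · rw [map_prod, Finset.prod_ne_zero_iff]
    exact fun p _ => eval_one_linkForm_ne_zero p.1 p.2
  · rw [map_prod, Finset.prod_ne_zero_iff] at hx
    exact (eval_linkForm_ne_zero_iff (G.point_ne_zero K x e) (G.point_ne_zero K x e')).mp
      (hx (e, e') (Finset.mem_univ _))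

lemma hilbert_eq_ncard_iff_exists_isIndicator [Finite K] [Finite V] :
    G.hilbert K d = (G.toricSet K).ncard ↔ ∃ f, G.IsIndicator K 1 d f :=
  (G.hilbert_eq_ncard_iff_map_evalMap_eq_top K d).trans map_evalMap_eq_top_iff_exists_isIndicator

lemma IsIndicator.reg_le [Finite K] [Finite V] {f : MvPolynomial E K}
    (hf : G.IsIndicator K 1 d f) : G.reg K ≤ d :=
  Nat.sInf_le (hilbert_eq_ncard_iff_exists_isIndicator.mpr ⟨f, hf⟩)

variable (K G) in
lemma exists_isIndicator_reg [Finite K] [Finite V] [Finite E] :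
    ∃ f, G.IsIndicator K 1 (G.reg K) f := by
  obtain ⟨d, hd⟩ := G.exists_isIndicator_one K
  have hne : {d | G.hilbert K d = (G.toricSet K).ncard}.Nonempty :=
    ⟨d, hilbert_eq_ncard_iff_exists_isIndicator.mpr hd⟩
  exact hilbert_eq_ncard_iff_exists_isIndicator.mp (Nat.sInf_mem hne)

variable (K G) in
lemma reg_eq_zero_of_isEmpty [Finite K] [Finite V] [IsEmpty E] : G.reg K = 0 :=
  Nat.le_zero.mp (IsIndicator.reg_le (f := 1) (isIndicator_one_iff.mpr
    ⟨isHomogeneous_one E K, by simp, fun _ _ e => isEmptyElim e⟩))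

end Indicator

section Hom

/-- A morphism of multigraphs: maps of vertices and of edges compatible with the endpoint maps.
The order in which an edge lists its endpoints is preserved. -/
structure Hom (H : Multigraph V₁ E₁) (G : Multigraph V E) where
  vert : V₁ → V
  edge : E₁ → E
  fst_edge : ∀ e, G.fst (edge e) = vert (H.fst e)
  snd_edge : ∀ e, G.snd (edge e) = vert (H.snd e)

variable {K} {G : Multigraph V E} {H₁ : Multigraph V₁ E₁} {H₂ : Multigraph V₂ E₂}

lemma Hom.point_comp_edge (φ : Hom H₁ G) (x : V → Kˣ) :
    G.point K x ∘ φ.edge = H₁.point K (x ∘ φ.vert) := by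
  ext e
  simp [point, φ.fst_edge, φ.snd_edge]

lemma Hom.point_edge_eq_of_eval_rename_ne_zero (φ : Hom H₁ G) {d : ℕ} {f : MvPolynomial E₁ K}
    (hf : H₁.IsIndicator K 1 d f) {x : V → Kˣ}
    (hx : eval (G.point K x) (rename φ.edge f) ≠ 0) (e e' : E₁) :
    G.point K x (φ.edge e) = G.point K x (φ.edge e') := by
  rw [eval_rename, φ.point_comp_edge] at hx
  have hconst := (isIndicator_one_iff.mp hf).2.2 _ hx e e'
  rwa [← φ.point_comp_edge] at hconst

lemma IsIndicator.rename_mul_rename_mul_linkForm [Fintype K] (φ₁ : Hom H₁ G) (φ₂ : Hom H₂ G)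
    (hcover : ∀ e, e ∈ Set.range φ₁.edge ∨ e ∈ Set.range φ₂.edge) {d₁ d₂ : ℕ}
    {f₁ : MvPolynomial E₁ K} {f₂ : MvPolynomial E₂ K}
    (hf₁ : H₁.IsIndicator K 1 d₁ f₁) (hf₂ : H₂.IsIndicator K 1 d₂ f₂) {a b : E}
    (ha : Nonempty E₁ → a ∈ Set.range φ₁.edge) (hb : Nonempty E₂ → b ∈ Set.range φ₂.edge) :
    G.IsIndicator K 1 (d₁ + d₂ + (Fintype.card K - 2))
      (rename φ₁.edge f₁ * rename φ₂.edge f₂ * linkForm K a b) := by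
  refine isIndicator_one_iff.mpr
    ⟨(hf₁.isHomogeneous.rename_isHomogeneous.mul hf₂.isHomogeneous.rename_isHomogeneous).mul
      (linkForm_isHomogeneous a b), ?_, fun x hx => ?_⟩
  · rw [map_mul, map_mul, eval_rename, eval_rename]
    exact mul_ne_zero
      (mul_ne_zero (isIndicator_one_iff.mp hf₁).2.1 (isIndicator_one_iff.mp hf₂).2.1)
      (eval_one_linkForm_ne_zero a b)
  · rw [map_mul, map_mul, mul_ne_zero_iff, mul_ne_zero_iff,
      eval_linkForm_ne_zero_iff (G.point_ne_zero K x a) (G.point_ne_zero K x b)] at hx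
    obtain ⟨⟨hx₁, hx₂⟩, hab⟩ := hx
    have heq_a : ∀ e, G.point K x e = G.point K x a := by
      intro e
      rcases hcover e with ⟨e₁, rfl⟩ | ⟨e₂, rfl⟩
      · obtain ⟨a₁, rfl⟩ := ha ⟨e₁⟩
        exact φ₁.point_edge_eq_of_eval_rename_ne_zero hf₁ hx₁ e₁ a₁
      · obtain ⟨b₂, rfl⟩ := hb ⟨e₂⟩
        exact (φ₂.point_edge_eq_of_eval_rename_ne_zero hf₂ hx₂ e₂ b₂).trans hab.symm
    exact fun e e' => (heq_a e).trans (heq_a e').symm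

lemma Hom.exists_mem_range_edge [Nonempty E] (φ : Hom H₁ G) :
    ∃ a, Nonempty E₁ → a ∈ Set.range φ.edge := by
  rcases isEmpty_or_nonempty E₁ with hE₁ | ⟨⟨e₁⟩⟩
  · exact ⟨Classical.arbitrary E, fun h => (not_isEmpty_iff.mpr h hE₁).elim⟩
  · exact ⟨φ.edge e₁, fun _ => ⟨e₁, rfl⟩⟩

variable (K) in
lemma reg_le_of_forall_mem_range_edge [Fintype K] [Finite V] [Finite V₁] [Finite V₂]
    [Finite E₁] [Finite E₂] (φ₁ : Hom H₁ G) (φ₂ : Hom H₂ G)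
    (hcover : ∀ e, e ∈ Set.range φ₁.edge ∨ e ∈ Set.range φ₂.edge) :
    G.reg K ≤ H₁.reg K + H₂.reg K + (Fintype.card K - 2) := by
  rcases isEmpty_or_nonempty E with _ | _
  · simp [G.reg_eq_zero_of_isEmpty K]
  · obtain ⟨f₁, hf₁⟩ := H₁.exists_isIndicator_reg K
    obtain ⟨f₂, hf₂⟩ := H₂.exists_isIndicator_reg K
    obtain ⟨a, ha⟩ := φ₁.exists_mem_range_edge
    obtain ⟨b, hb⟩ := φ₂.exists_mem_range_edge
    exact (IsIndicator.rename_mul_rename_mul_linkForm φ₁ φ₂ hcover hf₁ hf₂ ha hb).reg_le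

end Hom

end Multigraph

section ParallelComp

variable {ι κ : Type}

lemma pcVert_reindex (k : ι → ℕ) (f : κ → ι) (i : κ) (j : ℕ) :
    pcVert k (f i) j =
      Sum.map id (Sigma.map f fun _ => id) (pcVert (fun i => k (f i)) i j) := by
  unfold pcVert
  split_ifs <;> rfl

/-- The morphism of parallel compositions sending the path with index `i` identically onto the
path with index `f i`; for a subtype inclusion `f` it embeds a subfamily of the paths. -/
def parallelCompReindex (k : ι → ℕ) (f : κ → ι) :
    (parallelComp fun i => k (f i)).Hom (parallelComp k) where
  vert := Sum.map id (Sigma.map f fun _ => id)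
  edge := Sigma.map f fun _ => id
  fst_edge e := pcVert_reindex k f e.1 e.2
  snd_edge e := pcVert_reindex k f e.1 (e.2 + 1)

theorem reg_parallelComp_mixed_parity_upper_bound_general
    (K : Type) [Field K] [Fintype K] [Finite ι] (k : ι → ℕ) (p q : ι → Prop)
    (hpq : ∀ i, p i ∨ q i) :
    (parallelComp k).reg K ≤
      (parallelComp fun i : {i // p i} => k i.1).reg K +
      (parallelComp fun i : {i // q i} => k i.1).reg K +
      (Fintype.card K - 2) := by
  refine Multigraph.reg_le_of_forall_mem_range_edge K
    (parallelCompReindex k Subtype.val) (parallelCompReindex k Subtype.val) ?_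
  rintro ⟨i, j⟩
  exact (hpq i).imp (fun hi => ⟨⟨⟨i, hi⟩, j⟩, rfl⟩) (fun hi => ⟨⟨⟨i, hi⟩, j⟩, rfl⟩)

end ParallelComp

/-- **Lemma 3.4.**  Let `G` be the parallel composition of `r ≥ 2` paths whose lengths
have mixed parities, `H₁` the parallel composition of the paths of odd length and `H₂`
the parallel composition of the paths of even length.  Then
`reg G ≤ reg H₁ + reg H₂ + (q-2)`, where `q = |K|`. -/
theorem reg_parallelComp_mixed_parity_upper_bound
    (K : Type) [Field K] [Fintype K] (r : ℕ) (hr : 2 ≤ r)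
    (k : Fin r → ℕ) (hk : ∀ i, 0 < k i)
    (hodd : ∃ i, Odd (k i)) (heven : ∃ i, Even (k i)) :
    (parallelComp k).reg K ≤
      (parallelComp fun i : {i : Fin r // Odd (k i)} => k i.1).reg K +
      (parallelComp fun i : {i : Fin r // Even (k i)} => k i.1).reg K +
      (Fintype.card K - 2) :=
  reg_parallelComp_mixed_parity_upper_bound_general K k _ _ fun i => (Nat.even_or_odd (k i)).symm
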